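/- There exists an element Sc ∈ Ω (the 'Scasimir') such that: (i) σ_a Sc + Sc σ_a = 0 for every 1 ≤ a ≤ 2n; (ii) σ_{ab} Sc = Sc σ_{ab} for all 1 ≤ a, b ≤ 2n, where σ_{ab} := σ_a σ_b + σ_b σ_a; and (iii) Sc − [1, n+1, 2, n+2, …, n, 2n] lies in the ℚ-linear span of the antisymmetrized monomials [a_1 … a_p] with p < 2n. -/

import Mathlib

open scoped BigOperators TensorProduct
open Nat

noncomputable section

/-- The symplectic metric `g` of `osp(1|2n)` (0-indexed). -/
def gmat (n : ℕ) (a b : Fin (2*n)) : ℚ :=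
  if (a:ℕ) < n ∧ (b:ℕ) = (a:ℕ) + n then -1
  else if (b:ℕ) < n ∧ (a:ℕ) = (b:ℕ) + n then 1
  else 0

/-- The defining relations of `U(osp(1|2n))`:
`(σₐσ_b + σ_bσₐ)σ_c - σ_c(σₐσ_b + σ_bσₐ) = -g_{ac} σ_b - g_{bc} σₐ`. -/
inductive OspRel (n : ℕ) : FreeAlgebra ℚ (Fin (2*n)) → FreeAlgebra ℚ (Fin (2*n)) → Prop
  | rel (a b c : Fin (2*n)) : OspRel n
      ((FreeAlgebra.ι ℚ a * FreeAlgebra.ι ℚ b + FreeAlgebra.ι ℚ b * FreeAlgebra.ι ℚ a)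
          * FreeAlgebra.ι ℚ c)
      (FreeAlgebra.ι ℚ c *
          (FreeAlgebra.ι ℚ a * FreeAlgebra.ι ℚ b + FreeAlgebra.ι ℚ b * FreeAlgebra.ι ℚ a)
        - algebraMap ℚ (FreeAlgebra ℚ (Fin (2*n))) (gmat n a c) * FreeAlgebra.ι ℚ b
        - algebraMap ℚ (FreeAlgebra ℚ (Fin (2*n))) (gmat n b c) * FreeAlgebra.ι ℚ a)

/-- The universal enveloping superalgebra `U(osp(1|2n))`. -/
abbrev U (n : ℕ) := RingQuot (OspRel n)

/-- The fermionic generators `σₐ`. -/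
def σ (n : ℕ) (a : Fin (2*n)) : U n :=
  RingQuot.mkAlgHom ℚ (OspRel n) (FreeAlgebra.ι ℚ a)

/-- The bosonic generators `σ_{ab} = σₐσ_b + σ_bσₐ`. -/
def σσ (n : ℕ) (a b : Fin (2*n)) : U n := σ n a * σ n b + σ n b * σ n a

/-- The antisymmetrized monomial `[a₁ … a_p]`. -/
def brkt (n : ℕ) (p : ℕ) (a : Fin p → Fin (2*n)) : U n :=
  ∑ s : Equiv.Perm (Fin p),
    (Equiv.Perm.sign s : ℤ) • (List.ofFn fun i => σ n (a (s i))).prod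

/-- `Ω`, the span of all the antisymmetrized monomials. -/
def Omega (n : ℕ) : Submodule ℚ (U n) :=
  Submodule.span ℚ {x | ∃ p, ∃ a : Fin p → Fin (2*n), x = brkt n p a}


/-- The span of the antisymmetrized monomials `[a₁ … a_p]` with `p < N`. -/
def lowBrkt (n : ℕ) (N : ℕ) : Submodule ℚ (U n) :=
  Submodule.span ℚ {x | ∃ p, p < N ∧ ∃ a : Fin p → Fin (2*n), x = brkt n p a}

/-- The tuple `(1, n+1, 2, n+2, …, n, 2n)` (0-indexed). -/
def topTuple (n : ℕ) : Fin (2*n) → Fin (2*n) := fun j =>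
  if (j:ℕ) % 2 = 0 then ⟨(j:ℕ)/2, by have := j.isLt; omega⟩
  else ⟨(j:ℕ)/2 + n, by have := j.isLt; omega⟩


/-- The product `∏_{j<k} (Θ² - (j+1/2)² ω)`. -/
def halfIntProd {A : Type*} [Ring A] [Algebra ℚ A] (Θ ω : A) : ℕ → A
  | 0 => 1
  | k + 1 => halfIntProd Θ ω k * (Θ * Θ - (((k : ℚ) + 1/2)^2) • ω)

section abstractRing

variable {A : Type*} [Ring A] [Algebra ℚ A] {Θ ω m η D : A}

theorem halfIntProd_commute {x : A} (h : Commute x Θ) (h' : Commute x ω) (k : ℕ) :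
    Commute x (halfIntProd Θ ω k) := by
  induction k with
  | zero => exact Commute.one_right x
  | succ k ih => exact ih.mul_right ((h.mul_right h).sub_right (h'.smul_right _))

/-- The bilinear expression in left and right multiplications by `Θ` appearing when moving `m`
through `halfIntProd Θ ω`. -/
def halfIntShift (Θ ω m : A) (c : ℚ) : A :=
  c • (m * Θ * Θ) - c • (Θ * Θ * m) + Θ * m * Θ - c^2 • (ω * m)
    + (2 * c^2) • (Θ * Θ * m - (2 : ℚ) • (Θ * m * Θ) + m * Θ * Θ)

theorem halfIntShift_succ (hΘ : ω * Θ = Θ * ω) (hm : ω * m = m * ω)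
    (h3 : Θ * Θ * Θ * m - (3 : ℚ) • (Θ * Θ * m * Θ) + (3 : ℚ) • (Θ * m * Θ * Θ) - m * Θ * Θ * Θ
      = ω * (Θ * m - m * Θ)) (c : ℚ) :
    (Θ * Θ - c^2 • ω) * halfIntShift Θ ω m (c + 1)
      = halfIntShift Θ ω m c * (Θ * Θ - (c + 1)^2 • ω) := by
  have hl := congrArg (fun x => ((2 * c + 1) * (c + 1)) • (Θ * x)) h3
  have hr := congrArg (fun x => ((2 * c + 1) * c) • (x * Θ)) h3
  have a1 : ∀ x, Θ * (ω * x) = ω * (Θ * x) := fun x => by rw [← mul_assoc, ← hΘ, mul_assoc]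
  have a2 : ∀ x, m * (ω * x) = ω * (m * x) := fun x => by rw [← mul_assoc, ← hm, mul_assoc]
  simp only [halfIntShift, mul_add, add_mul, mul_sub, sub_mul, smul_mul_assoc, mul_smul_comm,
    mul_assoc, a1, a2, ← hΘ, ← hm] at hl hr ⊢
  linear_combination (norm := module) hl + hr

theorem halfIntProd_mul_shift (hΘ : ω * Θ = Θ * ω) (hm : ω * m = m * ω)
    (h3 : Θ * Θ * Θ * m - (3 : ℚ) • (Θ * Θ * m * Θ) + (3 : ℚ) • (Θ * m * Θ * Θ) - m * Θ * Θ * Θ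
      = ω * (Θ * m - m * Θ)) (k : ℕ) :
    halfIntProd Θ ω k * halfIntShift Θ ω m (k + 1/2) = m * halfIntProd Θ ω (k + 1) := by
  induction k with
  | zero =>
    simp only [halfIntProd, halfIntShift, mul_sub, mul_assoc, mul_smul_comm, hm, one_mul]
    push_cast
    module
  | succ k ih =>
    have e : ((k + 1 : ℕ) : ℚ) + 1/2 = (k + 1/2) + 1 := by push_cast; ring
    rw [e]
    conv_lhs => rw [halfIntProd, mul_assoc, halfIntShift_succ hΘ hm h3, ← mul_assoc, ih]
    conv_rhs => rw [halfIntProd, ← mul_assoc, e]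

/-- The commutator of `D` with `Θ ∏_{j<k} (Θ² - (j+1/2)² ω)`. -/
theorem commutator_mul_halfIntProd (hΘ : ω * Θ = Θ * ω) (hm : ω * m = m * ω)
    (hηΘ : η * Θ = Θ * η)
    (hDΘ : D * Θ = Θ * D + m) (hDω : D * ω = ω * D + (2 : ℚ) • η)
    (h2 : η * Θ = ω * m - (Θ * Θ * m - (2 : ℚ) • (Θ * m * Θ) + m * Θ * Θ)) (k : ℕ) :
    D * (Θ * halfIntProd Θ ω k) = Θ * halfIntProd Θ ω k * D
      + ((k : ℚ) + 1/2) • (m * halfIntProd Θ ω k + halfIntProd Θ ω k * m) := by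
  have h3 : Θ * Θ * Θ * m - (3 : ℚ) • (Θ * Θ * m * Θ) + (3 : ℚ) • (Θ * m * Θ * Θ)
      - m * Θ * Θ * Θ = ω * (Θ * m - m * Θ) := by
    have h := congrArg (fun x => Θ * x - x * Θ) h2
    have e : Θ * (η * Θ) - η * Θ * Θ = 0 := by rw [← mul_assoc, ← hηΘ, sub_self]
    have a1 : ∀ x, Θ * (ω * x) = ω * (Θ * x) := fun x => by rw [← mul_assoc, ← hΘ, mul_assoc]
    simp only [e] at h
    simp only [mul_add, add_mul, mul_sub, sub_mul, smul_mul_assoc, mul_smul_comm,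
      mul_assoc, a1] at h ⊢
    linear_combination (norm := module) h
  induction k with
  | zero => simp only [halfIntProd, mul_one, one_mul, hDΘ]; push_cast; module
  | succ k ih =>
    have key := halfIntProd_mul_shift hΘ hm h3 k
    have hXΘ : Θ * halfIntProd Θ ω k = halfIntProd Θ ω k * Θ :=
      halfIntProd_commute (Commute.refl Θ) hΘ.symm k
    set c : ℚ := (k : ℚ) + 1/2 with hc
    have e : ((k + 1 : ℕ) : ℚ) + 1/2 = c + 1 := by rw [hc]; push_cast; ring
    rw [e]
    have hQ : D * (Θ * Θ - c^2 • ω) = (Θ * Θ - c^2 • ω) * D + (Θ * m + m * Θ - (2 * c^2) • η) := by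
      rw [mul_sub, ← mul_assoc, hDΘ, add_mul, mul_assoc Θ D Θ, hDΘ, mul_smul_comm, hDω, sub_mul,
        smul_mul_assoc, mul_add, mul_assoc]
      module
    have hsucc : halfIntProd Θ ω (k + 1) = halfIntProd Θ ω k * (Θ * Θ - c^2 • ω) := rfl
    have h2' := congrArg (fun x => (2 * c^2) • (halfIntProd Θ ω k * x)) h2
    have step : D * (Θ * halfIntProd Θ ω (k + 1)) =
        Θ * halfIntProd Θ ω (k + 1) * D
        + c • ((m * halfIntProd Θ ω k + halfIntProd Θ ω k * m) * (Θ * Θ - c^2 • ω))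
        + halfIntProd Θ ω k * (Θ * (Θ * m + m * Θ - (2 * c^2) • η)) := by
      rw [hsucc, ← mul_assoc Θ, ← mul_assoc D, ih, add_mul, mul_assoc _ D, hQ, mul_add, hXΘ]
      simp only [mul_assoc, smul_mul_assoc]
      abel
    rw [step]
    rw [hsucc] at key ⊢
    simp only [halfIntShift, mul_add, add_mul, mul_sub, sub_mul, smul_mul_assoc, mul_smul_comm,
      mul_assoc, hηΘ, ← hm] at key h2' ⊢
    linear_combination (norm := module) key - h2'

end abstractRing

theorem gmat_antisymm (n : ℕ) (a b : Fin (2*n)) : gmat n b a = -gmat n a b := by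
  unfold gmat
  split_ifs <;> first | (exfalso; omega) | norm_num

theorem σσ_mul_σ (n : ℕ) (a b c : Fin (2*n)) :
    σσ n a b * σ n c = σ n c * σσ n a b - gmat n a c • σ n b - gmat n b c • σ n a := by
  have h := RingQuot.mkAlgHom_rel ℚ (OspRel.rel (n := n) a b c)
  simp only [map_sub, map_mul, map_add, AlgHom.commutes] at h
  simpa only [σσ, σ, Algebra.smul_def] using h

theorem sum_tmul_mul_sum_tmul {R C W ι κ : Type*} [CommRing R] [Ring C] [Algebra R C] [Ring W]
    [Algebra R W] [Fintype ι] [Fintype κ] (f : ι → C) (g : ι → W) (f' : κ → C) (g' : κ → W) :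
    (∑ i, f i ⊗ₜ[R] g i) * (∑ j, f' j ⊗ₜ[R] g' j) = ∑ i, ∑ j, (f i * f' j) ⊗ₜ[R] (g i * g' j) := by
  rw [Finset.sum_mul_sum]
  simp only [Algebra.TensorProduct.tmul_mul_tmul]

section cartan

variable {n : ℕ} {C : Type*} [Ring C] [Algebra ℚ C]

/-- The element `∑ τ_a ⊗ σ_a`. -/
def oddSum (τ : Fin (2*n) → C) : C ⊗[ℚ] U n := ∑ a, τ a ⊗ₜ σ n a

/-- The quadratic element `-∑ g_{bc} τ_b τ_c`. -/
def quadSum (τ : Fin (2*n) → C) : C := -∑ b, ∑ c, gmat n b c • (τ b * τ c)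

theorem commute_quadSum {τ : Fin (2*n) → C} {x : C} (h : ∀ b c, Commute x (τ b * τ c)) :
    Commute x (quadSum τ) :=
  (Commute.sum_right _ _ _ fun b _ => Commute.sum_right _ _ _ fun c _ =>
    (h b c).smul_right _).neg_right

variable {τ D : Fin (2*n) → C} {ε : C}

theorem commutator_quadSum (hετ : ∀ b, ε * τ b = -(τ b * ε))
    (hD : ∀ a b, D a * τ b = τ b * D a + if a = b then ε else 0) (a : Fin (2*n)) :
    D a * quadSum τ = quadSum τ * D a + (2 : ℚ) • ∑ c, gmat n a c • (τ c * ε) := by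
  have e : ∀ b c, D a * (τ b * τ c) = τ b * τ c * D a + (if a = c then τ b * ε else 0)
      - (if a = b then τ c * ε else 0) := by
    intro b c
    rw [← mul_assoc, hD, add_mul, mul_assoc (τ b) (D a), hD]
    split_ifs <;> simp [mul_add, hετ, mul_assoc, sub_eq_add_neg]
  simp only [quadSum, mul_neg, neg_mul, Finset.mul_sum, Finset.sum_mul, mul_smul_comm, e,
    smul_add, smul_sub, Finset.sum_add_distrib, Finset.sum_sub_distrib, smul_ite, smul_zero,
    Finset.sum_ite_eq, Finset.mem_univ, if_true, smul_mul_assoc]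
  rw [Finset.sum_comm (γ := Fin (2*n))
    (f := fun x y => if a = x then gmat n x y • (τ y * ε) else 0)]
  simp only [Finset.sum_ite_eq, Finset.mem_univ, if_true]
  have : ∀ x, gmat n x a • (τ x * ε) = -(gmat n a x • (τ x * ε)) := fun x => by
    rw [gmat_antisymm n a x, neg_smul]
  simp only [this, Finset.sum_neg_distrib]
  module

theorem double_commutator_oddSum (hττ : ∀ b c, τ b * τ c = -(τ c * τ b))
    (hετ : ∀ b, ε * τ b = -(τ b * ε)) (a : Fin (2*n)) :
    ((∑ c, gmat n a c • (τ c * ε)) ⊗ₜ[ℚ] (1 : U n)) * oddSum τ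
      = (quadSum τ ⊗ₜ[ℚ] (1 : U n)) * (ε ⊗ₜ σ n a)
        - (oddSum τ * oddSum τ * (ε ⊗ₜ σ n a)
          - (2 : ℚ) • (oddSum τ * (ε ⊗ₜ σ n a) * oddSum τ)
          + (ε ⊗ₜ σ n a) * oddSum τ * oddSum τ) := by
  have hετ' : ∀ b x, ε * (τ b * x) = -(τ b * (ε * x)) := fun b x => by
    rw [← mul_assoc, hετ, neg_mul, mul_assoc]
  have p1 : oddSum τ * oddSum τ * (ε ⊗ₜ σ n a)
      = ∑ b, ∑ c, (τ b * (τ c * ε)) ⊗ₜ[ℚ] (σ n b * (σ n c * σ n a)) := by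
    rw [oddSum, sum_tmul_mul_sum_tmul]
    simp only [Finset.sum_mul, Algebra.TensorProduct.tmul_mul_tmul, mul_assoc]
  have p2 : oddSum τ * (ε ⊗ₜ σ n a) * oddSum τ
      = ∑ b, ∑ c, (τ b * (ε * τ c)) ⊗ₜ[ℚ] (σ n b * (σ n a * σ n c)) := by
    have e0 : (ε ⊗ₜ σ n a) * oddSum τ = ∑ c, (ε * τ c) ⊗ₜ[ℚ] (σ n a * σ n c) := by
      simp only [oddSum, Finset.mul_sum, Algebra.TensorProduct.tmul_mul_tmul]
    rw [mul_assoc, e0, oddSum, sum_tmul_mul_sum_tmul]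
  have p3 : (ε ⊗ₜ σ n a) * oddSum τ * oddSum τ
      = ∑ b, ∑ c, (ε * (τ b * τ c)) ⊗ₜ[ℚ] (σ n a * (σ n b * σ n c)) := by
    rw [mul_assoc, oddSum, sum_tmul_mul_sum_tmul]
    simp only [Finset.mul_sum, Algebra.TensorProduct.tmul_mul_tmul]
  have e1 : oddSum τ * oddSum τ * (ε ⊗ₜ σ n a)
      - (2 : ℚ) • (oddSum τ * (ε ⊗ₜ σ n a) * oddSum τ) + (ε ⊗ₜ σ n a) * oddSum τ * oddSum τ
      = ∑ b, ∑ c, (τ b * (τ c * ε)) ⊗ₜ[ℚ] (σ n b * σσ n a c)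
        + ∑ b, ∑ c, (τ b * (τ c * ε)) ⊗ₜ[ℚ] (σσ n a b * σ n c) := by
    rw [p1, p2, p3, Finset.smul_sum, ← Finset.sum_sub_distrib, ← Finset.sum_add_distrib,
      ← Finset.sum_add_distrib]
    refine Finset.sum_congr rfl fun b _ => ?_
    rw [Finset.smul_sum, ← Finset.sum_sub_distrib, ← Finset.sum_add_distrib,
      ← Finset.sum_add_distrib]
    refine Finset.sum_congr rfl fun c _ => ?_
    simp only [hετ', hετ, mul_neg, neg_neg, TensorProduct.neg_tmul, σσ, mul_add, add_mul,
      TensorProduct.tmul_add, mul_assoc]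
    module
  have e2 : ∑ b, ∑ c, (τ b * (τ c * ε)) ⊗ₜ[ℚ] (σ n b * σσ n a c)
      = - ∑ b, ∑ c, (τ b * (τ c * ε)) ⊗ₜ[ℚ] (σ n c * σσ n a b) := by
    rw [Finset.sum_comm]
    simp only [← Finset.sum_neg_distrib]
    refine Finset.sum_congr rfl fun b _ => Finset.sum_congr rfl fun c _ => ?_
    rw [← mul_assoc, hττ, neg_mul, TensorProduct.neg_tmul, mul_assoc]
  have e3 : ((∑ c, gmat n a c • (τ c * ε)) ⊗ₜ[ℚ] (1 : U n)) * oddSum τ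
      = ∑ b, ∑ c, gmat n a c • ((τ b * (τ c * ε)) ⊗ₜ[ℚ] σ n b) := by
    simp only [oddSum, Finset.mul_sum, Algebra.TensorProduct.tmul_mul_tmul, Finset.sum_mul,
      TensorProduct.sum_tmul, one_mul, smul_mul_assoc, ← TensorProduct.smul_tmul']
    refine Finset.sum_congr rfl fun b _ => Finset.sum_congr rfl fun c _ => ?_
    rw [mul_assoc, hετ, mul_neg, ← mul_assoc, hττ, neg_mul, neg_neg, mul_assoc]
  have e4 : (quadSum τ ⊗ₜ[ℚ] (1 : U n)) * (ε ⊗ₜ σ n a)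
      = -∑ b, ∑ c, gmat n b c • ((τ b * (τ c * ε)) ⊗ₜ[ℚ] σ n a) := by
    rw [Algebra.TensorProduct.tmul_mul_tmul, one_mul]
    simp only [quadSum, Finset.sum_mul, neg_mul, TensorProduct.sum_tmul, smul_mul_assoc,
      ← TensorProduct.smul_tmul', TensorProduct.neg_tmul, mul_assoc]
  rw [e1, e2, e3, e4]
  have h5 : ∀ b c, (τ b * (τ c * ε)) ⊗ₜ[ℚ] (σσ n a b * σ n c)
      = (τ b * (τ c * ε)) ⊗ₜ[ℚ] (σ n c * σσ n a b)
        - gmat n a c • ((τ b * (τ c * ε)) ⊗ₜ[ℚ] σ n b)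
        - gmat n b c • ((τ b * (τ c * ε)) ⊗ₜ[ℚ] σ n a) := fun b c => by
    rw [σσ_mul_σ, TensorProduct.tmul_sub, TensorProduct.tmul_sub, TensorProduct.tmul_smul,
      TensorProduct.tmul_smul]
  simp only [h5, Finset.sum_sub_distrib]
  abel

/-- The commutator of `D_a ⊗ 1` with `Θ ∏_{j<k} (Θ² - (j+1/2)² ω)`, where `Θ = ∑ τ_b ⊗ σ_b`
and `ω = -∑ g_{bc} τ_b τ_c`. -/
theorem commutator_oddSum_halfIntProd (hττ : ∀ b c, τ b * τ c = -(τ c * τ b))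
    (hετ : ∀ b, ε * τ b = -(τ b * ε))
    (hD : ∀ a b, D a * τ b = τ b * D a + if a = b then ε else 0) (a : Fin (2*n)) (k : ℕ) :
    (D a ⊗ₜ[ℚ] (1 : U n)) * (oddSum τ * halfIntProd (oddSum τ) (quadSum τ ⊗ₜ 1) k)
      = oddSum τ * halfIntProd (oddSum τ) (quadSum τ ⊗ₜ 1) k * (D a ⊗ₜ[ℚ] (1 : U n))
      + ((k : ℚ) + 1/2) • ((ε ⊗ₜ σ n a) * halfIntProd (oddSum τ) (quadSum τ ⊗ₜ 1) k
        + halfIntProd (oddSum τ) (quadSum τ ⊗ₜ 1) k * (ε ⊗ₜ σ n a)) := by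
  have hτq : ∀ d, Commute (τ d) (quadSum τ) := fun d => commute_quadSum fun b c => by
    rw [Commute, SemiconjBy, ← mul_assoc, hττ, neg_mul, mul_assoc, hττ d c, mul_neg, neg_neg,
      mul_assoc]
  have hεq : Commute ε (quadSum τ) := commute_quadSum fun b c => by
    rw [Commute, SemiconjBy, ← mul_assoc, hετ, neg_mul, mul_assoc, hετ c, mul_neg, neg_neg,
      mul_assoc]
  refine commutator_mul_halfIntProd
    (η := (∑ c, gmat n a c • (τ c * ε)) ⊗ₜ[ℚ] (1 : U n)) ?_ ?_ ?_ ?_ ?_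
    (double_commutator_oddSum hττ hετ a) k
  · simp only [oddSum, Finset.mul_sum, Finset.sum_mul, Algebra.TensorProduct.tmul_mul_tmul,
      one_mul, mul_one, (hτq _).eq]
  · simp only [Algebra.TensorProduct.tmul_mul_tmul, one_mul, mul_one, hεq.eq]
  · simp only [oddSum, Finset.mul_sum, Finset.sum_mul, Algebra.TensorProduct.tmul_mul_tmul,
      one_mul, mul_one, smul_mul_assoc, mul_smul_comm]
    refine Finset.sum_congr rfl fun b _ => ?_
    congr 1
    refine Finset.sum_congr rfl fun c _ => ?_
    rw [mul_assoc, hετ, mul_neg, ← mul_assoc, hττ, neg_mul, neg_neg, mul_assoc]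
  · simp only [oddSum, Finset.mul_sum, Finset.sum_mul, Algebra.TensorProduct.tmul_mul_tmul,
      one_mul, mul_one, hD, TensorProduct.add_tmul, Finset.sum_add_distrib]
    congr 1
    rw [Finset.sum_eq_single a (fun b _ hb => by rw [if_neg hb.symm, TensorProduct.zero_tmul])
      (by simp), if_pos rfl]
  · rw [Algebra.TensorProduct.tmul_mul_tmul, commutator_quadSum hετ hD,
      Algebra.TensorProduct.tmul_mul_tmul, TensorProduct.add_tmul, ← TensorProduct.smul_tmul',
      mul_one]

theorem tmul_anticomm_eq_zero_of_halfIntProd_eq (hττ : ∀ b c, τ b * τ c = -(τ c * τ b))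
    (hετ : ∀ b, ε * τ b = -(τ b * ε))
    (hD : ∀ a b, D a * τ b = τ b * D a + if a = b then ε else 0) {k : ℕ} {T : C} {x : U n}
    (hx : halfIntProd (oddSum τ) (quadSum τ ⊗ₜ 1) k = T ⊗ₜ[ℚ] x) (hτT : ∀ b, τ b * T = 0)
    (hεT : ε * T = T * ε) (a : Fin (2*n)) :
    (T * ε) ⊗ₜ[ℚ] (σ n a * x + x * σ n a) = 0 := by
  have h0 : oddSum τ * (T ⊗ₜ[ℚ] x) = 0 := by
    rw [oddSum, Finset.sum_mul]
    refine Finset.sum_eq_zero fun b _ => ?_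
    rw [Algebra.TensorProduct.tmul_mul_tmul, hτT, TensorProduct.zero_tmul]
  have key := commutator_oddSum_halfIntProd hττ hετ hD a k
  rw [hx, h0, mul_zero, zero_mul, zero_add, eq_comm,
    smul_eq_zero_iff_right (by positivity : (k : ℚ) + 1/2 ≠ 0),
    Algebra.TensorProduct.tmul_mul_tmul, Algebra.TensorProduct.tmul_mul_tmul, hεT,
    ← TensorProduct.tmul_add] at key
  exact key

end cartan

theorem map_halfIntProd {A B : Type*} [Ring A] [Algebra ℚ A] [Ring B] [Algebra ℚ B]
    (F : A →ₐ[ℚ] B) (Θ ω : A) (k : ℕ) :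
    F (halfIntProd Θ ω k) = halfIntProd (F Θ) (F ω) k := by
  induction k with
  | zero => simp [halfIntProd]
  | succ k ih => simp only [halfIntProd, map_mul, map_sub, map_smul, ih]

/-- `halfIntProd Θ ω k` equals `Θ ^ (2k)` up to terms of lower degree in `Θ`. -/
theorem halfIntProd_sub_pow_mem {A : Type*} [Ring A] [Algebra ℚ A] {Θ ω : A}
    (h : Commute ω Θ) (k : ℕ) :
    halfIntProd Θ ω k - Θ ^ (2*k) ∈
      Submodule.span ℚ {x | ∃ j p, 2*j + p = 2*k ∧ p < 2*k ∧ x = ω^j * Θ^p} := by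
  induction k with
  | zero => simp [halfIntProd]
  | succ k ih =>
    set S := Submodule.span ℚ {x | ∃ j p, 2*j + p = 2*(k+1) ∧ p < 2*(k+1) ∧ x = ω^j * Θ^p}
    have h1 : ∀ r ∈ Submodule.span ℚ {x | ∃ j p, 2*j + p = 2*k ∧ p < 2*k ∧ x = ω^j * Θ^p},
        r * (Θ * Θ) ∈ S ∧ ω * r ∈ S := by
      intro r hr
      induction hr using Submodule.span_induction with
      | mem x hx =>
        obtain ⟨j, p, hjp, hp, rfl⟩ := hx
        exact ⟨Submodule.subset_span ⟨j, p + 2, by omega, by omega, by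
            rw [mul_assoc, pow_add, sq]⟩,
          Submodule.subset_span ⟨j + 1, p, by omega, by omega, by
            rw [← mul_assoc, ← _root_.pow_succ']⟩⟩
      | zero => simp
      | add x y _ _ hx hy =>
        rw [add_mul, mul_add]
        exact ⟨S.add_mem hx.1 hy.1, S.add_mem hx.2 hy.2⟩
      | smul c x _ hx =>
        rw [smul_mul_assoc, mul_smul_comm]
        exact ⟨S.smul_mem c hx.1, S.smul_mem c hx.2⟩
    have h2 : ω * Θ ^ (2*k) ∈ S :=
      Submodule.subset_span ⟨1, 2*k, by omega, by omega, by rw [pow_one]⟩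
    have h3 : Commute ω (halfIntProd Θ ω k) := halfIntProd_commute h (Commute.refl ω) k
    have e : halfIntProd Θ ω (k+1) - Θ ^ (2*(k+1))
        = (halfIntProd Θ ω k - Θ ^ (2*k)) * (Θ * Θ)
          - (((k : ℚ) + 1/2)^2) • (ω * (halfIntProd Θ ω k - Θ ^ (2*k)) + ω * Θ ^ (2*k)) := by
      rw [halfIntProd, ← mul_add, sub_add_cancel, h3.eq, mul_sub, mul_smul_comm, sub_mul,
        show 2 * (k + 1) = 2 * k + 2 by ring, pow_add, sq Θ]
      abel
    rw [e]
    exact S.sub_mem (h1 _ ih).1 (S.smul_mem _ (S.add_mem (h1 _ ih).2 h2))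

section exterior

variable (n : ℕ)

/-- The standard generators of the exterior algebra of `ℚ²ⁿ`. -/
def extGen (b : Fin (2*n)) : ExteriorAlgebra ℚ (Fin (2*n) → ℚ) :=
  ExteriorAlgebra.ι ℚ (Pi.single b 1)

/-- Left multiplication by a standard generator. -/
def extMul (b : Fin (2*n)) : Module.End ℚ (ExteriorAlgebra ℚ (Fin (2*n) → ℚ)) :=
  Algebra.lmul ℚ _ (extGen n b)

/-- The grading involution. -/
def extSign : Module.End ℚ (ExteriorAlgebra ℚ (Fin (2*n) → ℚ)) :=
  (CliffordAlgebra.involute (Q := (0 : QuadraticForm ℚ (Fin (2*n) → ℚ)))).toLinearMap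

/-- Contraction with a coordinate function, followed by the grading involution. -/
def extContract (a : Fin (2*n)) : Module.End ℚ (ExteriorAlgebra ℚ (Fin (2*n) → ℚ)) :=
  extSign n * CliffordAlgebra.contractLeft (Q := (0 : QuadraticForm ℚ (Fin (2*n) → ℚ)))
    (LinearMap.proj a)

theorem extGen_mul_extGen (b c : Fin (2*n)) :
    extGen n b * extGen n c = -(extGen n c * extGen n b) :=
  eq_neg_of_add_eq_zero_left (ExteriorAlgebra.ι_add_mul_swap _ _)

theorem extMul_mul_extMul (b c : Fin (2*n)) :
    extMul n b * extMul n c = -(extMul n c * extMul n b) := by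
  simp only [extMul, ← map_mul, ← map_neg]
  rw [extGen_mul_extGen]

theorem extSign_mul_extMul (b : Fin (2*n)) :
    extSign n * extMul n b = -(extMul n b * extSign n) := by
  refine LinearMap.ext fun x : ExteriorAlgebra ℚ (Fin (2*n) → ℚ) => ?_
  have : CliffordAlgebra.involute (extGen n b) = - extGen n b := CliffordAlgebra.involute_ι _
  change CliffordAlgebra.involute (extGen n b * x)
    = -(extGen n b * CliffordAlgebra.involute x)
  rw [map_mul, this, neg_mul]

theorem extContract_mul_extMul (a b : Fin (2*n)) :
    extContract n a * extMul n b
      = extMul n b * extContract n a + if a = b then extSign n else 0 := by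
  have h : ∀ x : ExteriorAlgebra ℚ (Fin (2*n) → ℚ),
      CliffordAlgebra.contractLeft (LinearMap.proj a) (extGen n b * x)
      = (Pi.single b (1 : ℚ) : Fin (2*n) → ℚ) a • x
        - extGen n b * CliffordAlgebra.contractLeft (LinearMap.proj a) x :=
    fun x => CliffordAlgebra.contractLeft_ι_mul _ _ _
  have h' : CliffordAlgebra.involute (extGen n b) = - extGen n b := CliffordAlgebra.involute_ι _
  refine LinearMap.ext fun x : ExteriorAlgebra ℚ (Fin (2*n) → ℚ) => ?_
  change CliffordAlgebra.involute (CliffordAlgebra.contractLeft (LinearMap.proj a) (extGen n b * x))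
    = extGen n b * CliffordAlgebra.involute (CliffordAlgebra.contractLeft (LinearMap.proj a) x)
      + (if a = b then extSign n else 0 : Module.End ℚ _) x
  rw [h, map_sub, map_mul, h', neg_mul, sub_neg_eq_add, add_comm, map_smul]
  congr 1
  split_ifs with hab
  · subst hab
    simp [extSign]
  · simp [Pi.single_eq_of_ne hab]

end exterior

section expansion

variable (n : ℕ)

/-- The exterior monomial attached to a tuple of indices. -/
def extWord (p : ℕ) (a : Fin p → Fin (2*n)) : ExteriorAlgebra ℚ (Fin (2*n) → ℚ) :=
  ExteriorAlgebra.ιMulti ℚ p fun i => Pi.single (a i) 1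

theorem extWord_cons {p : ℕ} (b : Fin (2*n)) (a : Fin p → Fin (2*n)) :
    extWord n (p+1) (Fin.cons b a) = extGen n b * extWord n p a := by
  rw [extWord, ExteriorAlgebra.ιMulti_succ_apply]
  rfl

theorem extWord_comp_perm {p : ℕ} (a : Fin p → Fin (2*n)) (s : Equiv.Perm (Fin p)) :
    extWord n p (a ∘ s) = (Equiv.Perm.sign s : ℤ) • extWord n p a :=
  (ExteriorAlgebra.ιMulti ℚ p (M := Fin (2*n) → ℚ)).map_perm
    (fun i => Pi.single (a i) 1) s

theorem extWord_eq_zero {p : ℕ} {a : Fin p → Fin (2*n)} (ha : ¬Function.Injective a) :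
    extWord n p a = 0 :=
  ExteriorAlgebra.ιMulti_eq_zero_of_not_inj (R := ℚ) (M := Fin (2*n) → ℚ)
    fun h => ha fun i j hij => h (by simp only [hij])

theorem oddSum_extGen_pow (p : ℕ) :
    oddSum (extGen n) ^ p
      = ∑ a : Fin p → Fin (2*n), extWord n p a ⊗ₜ[ℚ] (List.ofFn fun i => σ n (a i)).prod := by
  induction p with
  | zero => simp [extWord, Algebra.TensorProduct.one_def]
  | succ p ih =>
    rw [_root_.pow_succ', ih, oddSum, sum_tmul_mul_sum_tmul, ← Fintype.sum_prod_type',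
      ← (Fin.consEquiv fun _ => Fin (2*n)).sum_comp]
    refine Finset.sum_congr rfl fun x _ => ?_
    simp [Fin.consEquiv, extWord_cons, List.ofFn_succ]

theorem factorial_smul_oddSum_extGen_pow (p : ℕ) :
    (p ! : ℚ) • oddSum (extGen n) ^ p
      = ∑ a : Fin p → Fin (2*n), extWord n p a ⊗ₜ[ℚ] brkt n p a := by
  have h : ∀ s : Equiv.Perm (Fin p), oddSum (extGen n) ^ p
      = ∑ a : Fin p → Fin (2*n), extWord n p a ⊗ₜ[ℚ]
        ((Equiv.Perm.sign s : ℤ) • (List.ofFn fun i => σ n (a (s i))).prod) := by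
    intro s
    rw [oddSum_extGen_pow, ← (s.symm.arrowCongr (Equiv.refl (Fin (2*n)))).sum_comp]
    refine Finset.sum_congr rfl fun a _ => ?_
    change extWord n p (a ∘ s) ⊗ₜ[ℚ] (List.ofFn fun i => σ n (a (s i))).prod = _
    rw [extWord_comp_perm, TensorProduct.smul_tmul]
  simp only [brkt, TensorProduct.tmul_sum]
  rw [Finset.sum_comm, ← Finset.sum_congr rfl fun s _ => h s, Finset.sum_const, Finset.card_univ,
    Fintype.card_perm, Fintype.card_fin, Nat.cast_smul_eq_nsmul]

theorem topTuple_injective : Function.Injective (topTuple n) := by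
  intro i j h
  have h' := congrArg Fin.val h
  unfold topTuple at h'
  have := i.isLt
  have := j.isLt
  ext
  split_ifs at h' <;> simp only at h' <;> omega

theorem oddSum_extGen_pow_top :
    oddSum (extGen n) ^ (2*n) = extWord n (2*n) (topTuple n) ⊗ₜ[ℚ] brkt n (2*n) (topTuple n) := by
  rw [oddSum_extGen_pow, brkt, TensorProduct.tmul_sum]
  symm
  refine Finset.sum_of_injOn (fun s : Equiv.Perm (Fin (2*n)) => topTuple n ∘ s) ?_ ?_ ?_ ?_
  · intro s _ t _ h
    ext1 i
    exact topTuple_injective n (congrFun h i)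
  · intro s _
    exact Finset.mem_coe.2 (Finset.mem_univ _)
  · intro a _ ha
    rw [extWord_eq_zero, TensorProduct.zero_tmul]
    intro hinj
    apply ha
    have hb := Finite.injective_iff_bijective.1 (topTuple_injective n)
    have hb' := Finite.injective_iff_bijective.1 hinj
    refine ⟨(Equiv.ofBijective a hb').trans (Equiv.ofBijective _ hb).symm, by simp, ?_⟩
    ext1 i
    exact (Equiv.ofBijective _ hb).apply_symm_apply (a i)
  · intro s _
    simp only [extWord_comp_perm, TensorProduct.smul_tmul, Function.comp_apply]

theorem extGen_mul_extWord_top (b : Fin (2*n)) :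
    extGen n b * extWord n (2*n) (topTuple n) = 0 := by
  rw [← extWord_cons, extWord_eq_zero]
  intro h
  simpa using Fintype.card_le_of_injective _ h

/-- The top exterior monomial is detected by a linear functional. -/
theorem exists_functional_extWord_top :
    ∃ f : ExteriorAlgebra ℚ (Fin (2*n) → ℚ) →ₗ[ℚ] ℚ, f (extWord n (2*n) (topTuple n)) = 1 := by
  let b := (Pi.basisFun ℚ (Fin (2*n))).reindex
    (Equiv.ofBijective _ (Finite.injective_iff_bijective.1 (topTuple_injective n))).symm
  refine ⟨ExteriorAlgebra.liftAlternating (Pi.single (2*n) b.det), ?_⟩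
  rw [extWord, ExteriorAlgebra.liftAlternating_apply_ιMulti, Pi.single_eq_same]
  convert b.det_self with i
  simp [b]

theorem extWord_top_ne_zero : extWord n (2*n) (topTuple n) ≠ 0 := by
  obtain ⟨f, hf⟩ := exists_functional_extWord_top n
  intro h
  simp [h] at hf

theorem exists_smul_extWord_top {x : ExteriorAlgebra ℚ (Fin (2*n) → ℚ)}
    (hx : x ∈ LinearMap.range (ExteriorAlgebra.ι ℚ (M := Fin (2*n) → ℚ)) ^ (2*n)) :
    ∃ c : ℚ, x = c • extWord n (2*n) (topTuple n) := by
  have h1 : Module.finrank ℚ (⋀[ℚ]^(2*n) (Fin (2*n) → ℚ)) = 1 := by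
    rw [exteriorPower.finrank_eq, Module.finrank_fin_fun, Nat.choose_self]
  have hT : extWord n (2*n) (topTuple n) ∈ ⋀[ℚ]^(2*n) (Fin (2*n) → ℚ) :=
    ExteriorAlgebra.ιMulti_range ℚ (2*n) ⟨_, rfl⟩
  obtain ⟨c, hc⟩ := (finrank_eq_one_iff_of_nonzero' (⟨_, hT⟩ : ⋀[ℚ]^(2*n) (Fin (2*n) → ℚ))
    (fun h => extWord_top_ne_zero n (congrArg Subtype.val h))).1 h1 ⟨x, hx⟩
  exact ⟨c, (congrArg Subtype.val hc).symm⟩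

theorem quadSum_extGen_pow_mul_extWord_mem (j p : ℕ) (a : Fin p → Fin (2*n)) :
    quadSum (extGen n) ^ j * extWord n p a
      ∈ LinearMap.range (ExteriorAlgebra.ι ℚ (M := Fin (2*n) → ℚ)) ^ (2*j + p) := by
  have hq : quadSum (extGen n) ∈ LinearMap.range (ExteriorAlgebra.ι ℚ (M := Fin (2*n) → ℚ)) ^ 2 := by
    rw [quadSum, sq]
    exact Submodule.neg_mem _ (Submodule.sum_mem _ fun b _ => Submodule.sum_mem _ fun c _ =>
      Submodule.smul_mem _ _ (Submodule.mul_mem_mul ⟨_, rfl⟩ ⟨_, rfl⟩))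
  rw [pow_add, pow_mul]
  exact Submodule.mul_mem_mul (Submodule.pow_mem_pow _ hq j)
    (ExteriorAlgebra.ιMulti_range ℚ p ⟨_, rfl⟩)

theorem quadSum_pow_mul_oddSum_pow_mem {j p : ℕ} (hjp : 2*j + p = 2*n) (hp : p < 2*n) :
    (quadSum (extGen n) ⊗ₜ[ℚ] (1 : U n)) ^ j * oddSum (extGen n) ^ p
      ∈ (lowBrkt n (2*n)).map
        (TensorProduct.mk ℚ _ (U n) (extWord n (2*n) (topTuple n))) := by
  have h := factorial_smul_oddSum_extGen_pow n p
  rw [← eq_inv_smul_iff₀ (Nat.cast_ne_zero.2 p.factorial_ne_zero)] at h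
  rw [h, mul_smul_comm, Finset.mul_sum, Algebra.TensorProduct.tmul_pow, one_pow]
  refine Submodule.smul_mem _ _ (Submodule.sum_mem _ fun a _ => ?_)
  rw [Algebra.TensorProduct.tmul_mul_tmul, one_mul]
  have hm := quadSum_extGen_pow_mul_extWord_mem n j p a
  rw [hjp] at hm
  obtain ⟨c, hc⟩ := exists_smul_extWord_top n hm
  rw [hc]
  refine ⟨c • brkt n p a, Submodule.smul_mem _ _ (Submodule.subset_span ⟨p, hp, a, rfl⟩), ?_⟩
  rw [TensorProduct.mk_apply, TensorProduct.smul_tmul]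

theorem exists_halfIntProd_eq_tmul :
    ∃ Sc : U n, Sc - brkt n (2*n) (topTuple n) ∈ lowBrkt n (2*n) ∧
      halfIntProd (oddSum (extGen n)) (quadSum (extGen n) ⊗ₜ[ℚ] (1 : U n)) n
        = extWord n (2*n) (topTuple n) ⊗ₜ[ℚ] Sc := by
  have hc : Commute (quadSum (extGen n) ⊗ₜ[ℚ] (1 : U n)) (oddSum (extGen n)) := by
    refine Commute.sum_right _ _ _ fun b _ => ?_
    have : Commute (extGen n b) (quadSum (extGen n)) := commute_quadSum fun c d => by
      rw [Commute, SemiconjBy, ← mul_assoc, extGen_mul_extGen, neg_mul, mul_assoc,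
        extGen_mul_extGen n b d, mul_neg, neg_neg, mul_assoc]
    rw [Commute, SemiconjBy, Algebra.TensorProduct.tmul_mul_tmul,
      Algebra.TensorProduct.tmul_mul_tmul, this.eq, one_mul, mul_one]
  have h := halfIntProd_sub_pow_mem hc n
  have hle : Submodule.span ℚ {x | ∃ j p, 2*j + p = 2*n ∧ p < 2*n ∧
      x = (quadSum (extGen n) ⊗ₜ[ℚ] (1 : U n)) ^ j * oddSum (extGen n) ^ p}
      ≤ (lowBrkt n (2*n)).map
        (TensorProduct.mk ℚ _ (U n) (extWord n (2*n) (topTuple n))) := by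
    rw [Submodule.span_le]
    rintro _ ⟨j, p, hjp, hp, rfl⟩
    exact quadSum_pow_mul_oddSum_pow_mem n hjp hp
  obtain ⟨y, hy, hy'⟩ := hle h
  refine ⟨brkt n (2*n) (topTuple n) + y, by simpa using hy, ?_⟩
  rw [TensorProduct.tmul_add, ← oddSum_extGen_pow_top]
  exact (sub_eq_iff_eq_add'.1 hy'.symm)

end expansion

section scasimir

variable {n : ℕ}

theorem extSign_mul_extWord_top :
    extSign n * Algebra.lmul ℚ _ (extWord n (2*n) (topTuple n))
      = Algebra.lmul ℚ _ (extWord n (2*n) (topTuple n)) * extSign n := by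
  have h : CliffordAlgebra.involute (extWord n (2*n) (topTuple n))
      = extWord n (2*n) (topTuple n) := by
    have := CliffordAlgebra.involute_prod_map_ι (Q := (0 : QuadraticForm ℚ (Fin (2*n) → ℚ)))
      (List.ofFn fun i => Pi.single (topTuple n i) 1)
    rw [List.map_ofFn, List.length_ofFn, pow_mul, neg_one_sq, one_pow, one_smul] at this
    rw [extWord, ExteriorAlgebra.ιMulti_apply]
    exact this
  refine LinearMap.ext fun x : ExteriorAlgebra ℚ (Fin (2*n) → ℚ) => ?_
  change CliffordAlgebra.involute (extWord n (2*n) (topTuple n) * x)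
    = extWord n (2*n) (topTuple n) * CliffordAlgebra.involute x
  rw [map_mul, h]

theorem σ_mul_add_mul_σ_of_halfIntProd_eq {Sc : U n}
    (h : halfIntProd (oddSum (extGen n)) (quadSum (extGen n) ⊗ₜ[ℚ] (1 : U n)) n
      = extWord n (2*n) (topTuple n) ⊗ₜ[ℚ] Sc) (a : Fin (2*n)) :
    σ n a * Sc + Sc * σ n a = 0 := by
  let Φ := Algebra.TensorProduct.map
    (Algebra.lmul ℚ (ExteriorAlgebra ℚ (Fin (2*n) → ℚ))) (AlgHom.id ℚ (U n))
  have hΘ : Φ (oddSum (extGen n)) = oddSum (extMul n) := by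
    simp only [oddSum, map_sum]
    rfl
  have hω : Φ (quadSum (extGen n) ⊗ₜ[ℚ] (1 : U n)) = quadSum (extMul n) ⊗ₜ[ℚ] (1 : U n) := by
    change Algebra.lmul ℚ _ (quadSum (extGen n)) ⊗ₜ[ℚ] (1 : U n) = _
    simp only [quadSum, map_neg, map_sum, map_smul, map_mul]
    rfl
  have hX : halfIntProd (oddSum (extMul n)) (quadSum (extMul n) ⊗ₜ[ℚ] (1 : U n)) n
      = Algebra.lmul ℚ _ (extWord n (2*n) (topTuple n)) ⊗ₜ[ℚ] Sc := by
    rw [← hΘ, ← hω, ← map_halfIntProd, h]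
    rfl
  have h0 : ∀ b, extMul n b * Algebra.lmul ℚ _ (extWord n (2*n) (topTuple n)) = 0 := fun b => by
    rw [extMul, ← map_mul, extGen_mul_extWord_top, map_zero]
  have key := tmul_anticomm_eq_zero_of_halfIntProd_eq (C := Module.End ℚ _)
    (extMul_mul_extMul n) (extSign_mul_extMul n) (extContract_mul_extMul n) hX h0
    extSign_mul_extWord_top a
  obtain ⟨f, hf⟩ := exists_functional_extWord_top n
  have hev := congrArg (fun z => TensorProduct.lid ℚ (U n)
    ((f ∘ₗ LinearMap.applyₗ (1 : ExteriorAlgebra ℚ (Fin (2*n) → ℚ))).rTensor (U n) z)) key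
  have h1 : extSign n (1 : ExteriorAlgebra ℚ (Fin (2*n) → ℚ)) = 1 :=
    map_one CliffordAlgebra.involute
  simpa [h1, hf] using hev

theorem add_mul_swap_commute_of_anticomm {A : Type*} [Ring A] {s t x : A}
    (hs : s * x + x * s = 0) (ht : t * x + x * t = 0) :
    (s * t + t * s) * x = x * (s * t + t * s) := by
  have hs' := eq_neg_of_add_eq_zero_left hs
  have ht' := eq_neg_of_add_eq_zero_left ht
  rw [add_mul, mul_assoc, ht', mul_neg, ← mul_assoc, hs', mul_assoc t s x, hs', mul_neg,
    ← mul_assoc t x s, ht', neg_mul, neg_mul, neg_neg, neg_neg, mul_add, mul_assoc, mul_assoc]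

theorem lowBrkt_le_Omega (N : ℕ) : lowBrkt n N ≤ Omega n :=
  Submodule.span_mono fun _ ⟨p, _, a, h⟩ => ⟨p, a, h⟩

end scasimir

/-- There is a Scasimir `Sc ∈ Ω`: it anticommutes with all fermionic
generators `σₐ`, commutes with all bosonic generators `σ_{ab}`, and equals
`[1, n+1, 2, n+2, …, n, 2n]` up to a span of lower-order antisymmetrized monomials. -/
theorem stmt4 (n : ℕ) (hn : 1 ≤ n) :
    ∃ Sc ∈ Omega n,
      (∀ a : Fin (2*n), σ n a * Sc + Sc * σ n a = 0) ∧
      (∀ a b : Fin (2*n), σσ n a b * Sc = Sc * σσ n a b) ∧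
      Sc - brkt n (2*n) (topTuple n) ∈ lowBrkt n (2*n) := by
  obtain ⟨Sc, hlow, hSc⟩ := exists_halfIntProd_eq_tmul n
  have hanti := σ_mul_add_mul_σ_of_halfIntProd_eq hSc
  refine ⟨Sc, ?_, hanti,
    fun a b => add_mul_swap_commute_of_anticomm (hanti a) (hanti b), hlow⟩
  rw [← sub_add_cancel Sc (brkt n (2*n) (topTuple n))]
  exact add_mem (lowBrkt_le_Omega _ hlow) (Submodule.subset_span ⟨2*n, topTuple n, rfl⟩)

end
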